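/- Let s_1, s_2, s_3 be positive integers and set s = s_1+s_2+s_3. Then for every natural number x, the following identity holds in the integers: (x+1)·π(SK4^{s_1,s_2,s_3}, x+1) = x·(x−1)·( x^s + (−1)^(s_1+s_2+1)·x^(s_3) + (−1)^(s_1+s_3+1)·x^(s_2) + (−1)^(s_2+s_3+1)·x^(s_1) + 2·(−1)^s ). -/

import Mathlib

/-!
Write `k = x + 1` for the number of colors. A coloring of `SK₄^{s₁,s₂,s₃}` is a coloring of the
triangle by three distinct colors `t 0, t 1, t 2`, a color `c` of `w`, and, for each `i`, a proper
coloring of the interior of a path with `sᵢ` edges whose ends are colored `c` and `t i`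
(`coloringEquiv`). The number `N s a b` of colorings of the interior of a path with `s` edges and
end colors `a`, `b` is the `(a, b)` entry of the `s`-th power of the matrix `J - I`, so that
`k * N s a b = x ^ s - (-1) ^ s + k * (-1) ^ s * [a = b]` (`card_pathColoring`).

Set `Cᵢ = x ^ sᵢ - (-1) ^ sᵢ` and `eᵢ = (-1) ^ sᵢ`. For a fixed triangle coloring, the products
`[c = t i] * [c = t j]` with `i ≠ j` vanish, hence
`∑ c, ∏ i, k * N sᵢ c (t i) = k * (C₁ C₂ C₃ + e₁ C₂ C₃ + e₂ C₁ C₃ + e₃ C₁ C₂)`. There are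
`k * x * (x - 1)` triangle colorings, and substituting `Cᵢ = x ^ sᵢ - eᵢ` gives the formula.
-/

open SimpleGraph Finset

/-- `chromPoly G x` is the number of proper `x`-colorings of the graph `G`,
i.e. the value `π(G,x)` of the chromatic polynomial at `x`. -/
noncomputable def chromPoly {V : Type} (G : SimpleGraph V) (x : ℕ) : ℕ :=
  Nat.card {f : V → Fin x // ∀ ⦃u v : V⦄, G.Adj u v → f u ≠ f v}

/-- Relation generating the subdivision `SK₄^{s₁,s₂,s₃}` of `K₄`: vertex `Sum.inl 0`
is `w`; the three edges from `w` to the triangle vertices `Sum.inl 1`, `Sum.inl 2`,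
`Sum.inl 3` are replaced by internally disjoint paths with `s₁`, `s₂`, `s₃` edges
(internal vertices being the `Fin (sᵢ - 1)` blocks), and the triangle is undivided. -/
def sk4Rel (s₁ s₂ s₃ : ℕ) :
    (Fin 4 ⊕ (Fin (s₁-1) ⊕ Fin (s₂-1) ⊕ Fin (s₃-1))) →
    (Fin 4 ⊕ (Fin (s₁-1) ⊕ Fin (s₂-1) ⊕ Fin (s₃-1))) → Prop
  | Sum.inl a, Sum.inl b =>
      (a = 1 ∧ b = 2) ∨ (a = 1 ∧ b = 3) ∨ (a = 2 ∧ b = 3) ∨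
      (a = 0 ∧ b = 1 ∧ s₁ = 1) ∨ (a = 0 ∧ b = 2 ∧ s₂ = 1) ∨ (a = 0 ∧ b = 3 ∧ s₃ = 1)
  | Sum.inl a, Sum.inr (Sum.inl i) => (a = 0 ∧ (i:ℕ) = 0) ∨ (a = 1 ∧ (i:ℕ) = s₁ - 2)
  | Sum.inl a, Sum.inr (Sum.inr (Sum.inl i)) => (a = 0 ∧ (i:ℕ) = 0) ∨ (a = 2 ∧ (i:ℕ) = s₂ - 2)
  | Sum.inl a, Sum.inr (Sum.inr (Sum.inr i)) => (a = 0 ∧ (i:ℕ) = 0) ∨ (a = 3 ∧ (i:ℕ) = s₃ - 2)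
  | Sum.inr (Sum.inl i), Sum.inr (Sum.inl j) => (j:ℕ) = (i:ℕ) + 1
  | Sum.inr (Sum.inr (Sum.inl i)), Sum.inr (Sum.inr (Sum.inl j)) => (j:ℕ) = (i:ℕ) + 1
  | Sum.inr (Sum.inr (Sum.inr i)), Sum.inr (Sum.inr (Sum.inr j)) => (j:ℕ) = (i:ℕ) + 1
  | _, _ => False

/-- The subdivision `SK₄^{s₁,s₂,s₃}` of `K₄` in which the three edges incident to one
vertex `w` are replaced by internally disjoint paths with `s₁`, `s₂`, `s₃` edges,
while the opposite triangle is left undivided. -/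
def sk4Graph (s₁ s₂ s₃ : ℕ) :
    SimpleGraph (Fin 4 ⊕ (Fin (s₁-1) ⊕ Fin (s₂-1) ⊕ Fin (s₃-1))) :=
  SimpleGraph.fromRel (sk4Rel s₁ s₂ s₃)

/-- `g` properly colors the `s - 1` interior vertices of a path with `s` edges whose first and
last vertices have colors `a` and `b`. When `s = 1` there is no interior vertex and the condition
is `a ≠ b`. -/
def IsPathColoring {α : Type} (s : ℕ) (a b : α) (g : Fin (s - 1) → α) : Prop :=
  (s = 1 → a ≠ b) ∧ (∀ i : Fin (s - 1), (i : ℕ) = 0 → a ≠ g i) ∧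
    (∀ i : Fin (s - 1), (i : ℕ) = s - 2 → b ≠ g i) ∧
    ∀ i j : Fin (s - 1), (j : ℕ) = (i : ℕ) + 1 → g i ≠ g j

lemma isPathColoring_cons {α : Type} (m : ℕ) (a b c : α) (g : Fin m → α) :
    IsPathColoring (m + 2) a b (Fin.cons c g : Fin (m + 1) → α) ↔
      a ≠ c ∧ IsPathColoring (m + 1) c b g := by
  change ((m + 2 = 1 → a ≠ b) ∧
      (∀ i : Fin (m + 1), (i : ℕ) = 0 → a ≠ (Fin.cons c g : Fin (m + 1) → α) i) ∧
      (∀ i : Fin (m + 1), (i : ℕ) = m → b ≠ (Fin.cons c g : Fin (m + 1) → α) i) ∧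
      ∀ i j : Fin (m + 1), (j : ℕ) = (i : ℕ) + 1 →
        (Fin.cons c g : Fin (m + 1) → α) i ≠ (Fin.cons c g : Fin (m + 1) → α) j) ↔
    a ≠ c ∧ (m + 1 = 1 → c ≠ b) ∧ (∀ i : Fin m, (i : ℕ) = 0 → c ≠ g i) ∧
      (∀ i : Fin m, (i : ℕ) = m + 1 - 2 → b ≠ g i) ∧
      ∀ i j : Fin m, (j : ℕ) = (i : ℕ) + 1 → g i ≠ g j
  simp only [Fin.forall_fin_succ, Fin.cons_zero, Fin.cons_succ, Fin.val_zero, Fin.val_succ]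
  have h : ∀ i : Fin m, (i : ℕ) = m + 1 - 2 ↔ (i : ℕ) + 1 = m := fun i => by
    have := i.2
    omega
  simp only [h]
  constructor
  · rintro ⟨-, ⟨h1, -⟩, ⟨h2, h3⟩, ⟨-, h4⟩, h5⟩
    refine ⟨h1 trivial, fun hm => (h2 (by omega)).symm, fun i hi => h4 i (by omega), h3,
      fun i j hij => (h5 i).2 j (by omega)⟩
  · rintro ⟨h1, h2, h3, h4, h5⟩
    refine ⟨by omega, ⟨fun _ => h1, fun i hi => by omega⟩,
      ⟨fun hm => (h2 (by omega)).symm, h4⟩,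
      ⟨by omega, fun j hj => h3 j (by omega)⟩,
      fun i => ⟨by omega, fun j hj => h5 i j (by omega)⟩⟩

/-- A coloring of the interior of a path with `m + 2` edges amounts to a color `c ≠ a` for its
first vertex and a coloring of the interior of the remaining path, which starts at color `c`. -/
def pathColoringSuccEquiv {α : Type} (m : ℕ) (a b : α) :
    {g : Fin (m + 1) → α // IsPathColoring (m + 2) a b g} ≃
      Σ c : {c : α // a ≠ c}, {g : Fin m → α // IsPathColoring (m + 1) c.1 b g} where
  toFun g :=
    have h := (isPathColoring_cons m a b (g.1 0) (Fin.tail g.1)).1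
      (by rw [Fin.cons_self_tail]; exact g.2)
    ⟨⟨g.1 0, h.1⟩, ⟨Fin.tail g.1, h.2⟩⟩
  invFun p := ⟨Fin.cons p.1.1 p.2.1, (isPathColoring_cons m a b _ _).2 ⟨p.1.2, p.2.2⟩⟩
  left_inv g := Subtype.ext (Fin.cons_self_tail g.1)
  right_inv _ := rfl

/-- The entries of the powers of `J - I`, cleared of the denominator `x + 1`. -/
lemma card_pathColoring (x m : ℕ) (a b : Fin (x + 1)) :
    ((x : ℤ) + 1) * Nat.card {g : Fin (m + 1 - 1) → Fin (x + 1) // IsPathColoring (m + 1) a b g} =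
      (x : ℤ) ^ (m + 1) - (-1) ^ (m + 1) + if a = b then ((x : ℤ) + 1) * (-1) ^ (m + 1) else 0 := by
  change ((x : ℤ) + 1) * Nat.card {g : Fin m → Fin (x + 1) // IsPathColoring (m + 1) a b g} = _
  induction m generalizing a with
  | zero =>
    by_cases hab : a = b
    · have : IsEmpty {g : Fin 0 → Fin (x + 1) // IsPathColoring (0 + 1) a b g} :=
        ⟨fun g => g.2.1 rfl hab⟩
      rw [Nat.card_of_isEmpty, if_pos hab]
      push_cast
      ring
    · have : Unique {g : Fin 0 → Fin (x + 1) // IsPathColoring (0 + 1) a b g} :=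
        { default := ⟨Fin.elim0, fun _ => hab, fun i => i.elim0, fun i => i.elim0,
            fun i => i.elim0⟩
          uniq := fun g => Subtype.ext (Subsingleton.elim _ _) }
      rw [Nat.card_unique, if_neg hab]
      push_cast
      ring
  | succ m ih =>
    rw [Nat.card_congr (pathColoringSuccEquiv m a b), Nat.card_sigma, Nat.cast_sum,
      Finset.mul_sum]
    simp only [ih]
    -- sum over all colors `c` and subtract the term `c = a`
    have hsub : ∀ F : Fin (x + 1) → ℤ, ∑ c : {c // a ≠ c}, F c.1 = ∑ c, F c - F a := by
      intro F
      rw [← Finset.sum_subtype (Finset.univ.erase a) (by simp [eq_comm]) F,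
        ← Finset.add_sum_erase _ F (Finset.mem_univ a)]
      ring
    rw [hsub (fun c => (x : ℤ) ^ (m + 1) - (-1) ^ (m + 1) +
      if c = b then ((x : ℤ) + 1) * (-1) ^ (m + 1) else 0)]
    simp only [Finset.sum_add_distrib, Finset.sum_const, Finset.card_univ, Fintype.card_fin,
      Finset.sum_ite_eq', Finset.mem_univ, if_true, nsmul_eq_mul]
    push_cast
    split_ifs <;> ring

/-- The relation `sk4Rel` is irreflexive, so symmetrizing it loses no constraint. -/
lemma proper_iff_rel {α : Type} (s₁ s₂ s₃ : ℕ)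
    (f : Fin 4 ⊕ (Fin (s₁-1) ⊕ Fin (s₂-1) ⊕ Fin (s₃-1)) → α) :
    (∀ ⦃u v⦄, (sk4Graph s₁ s₂ s₃).Adj u v → f u ≠ f v) ↔
      ∀ u v, sk4Rel s₁ s₂ s₃ u v → f u ≠ f v := by
  have hirr : ∀ u, ¬ sk4Rel s₁ s₂ s₃ u u := by
    rintro (u | u | u | u) h
    · simp only [sk4Rel] at h
      omega
    all_goals simp [sk4Rel] at h
  simp only [sk4Graph, SimpleGraph.fromRel_adj]
  constructor
  · intro h u v huv
    exact h ⟨fun e => hirr v (e ▸ huv), Or.inl huv⟩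
  · rintro h u v ⟨-, huv | huv⟩
    · exact h u v huv
    · exact (h v u huv).symm

lemma proper_iff {α : Type} (s₁ s₂ s₃ : ℕ)
    (f : Fin 4 ⊕ (Fin (s₁-1) ⊕ Fin (s₂-1) ⊕ Fin (s₃-1)) → α) :
    (∀ ⦃u v⦄, (sk4Graph s₁ s₂ s₃).Adj u v → f u ≠ f v) ↔
      Function.Injective (fun i : Fin 3 => f (Sum.inl i.succ)) ∧
      IsPathColoring s₁ (f (Sum.inl 0)) (f (Sum.inl 1)) (fun i => f (Sum.inr (Sum.inl i))) ∧
      IsPathColoring s₂ (f (Sum.inl 0)) (f (Sum.inl 2))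
        (fun i => f (Sum.inr (Sum.inr (Sum.inl i)))) ∧
      IsPathColoring s₃ (f (Sum.inl 0)) (f (Sum.inl 3))
        (fun i => f (Sum.inr (Sum.inr (Sum.inr i)))) := by
  rw [proper_iff_rel]
  constructor
  · intro h
    have h12 := h (Sum.inl 1) (Sum.inl 2) (by simp [sk4Rel])
    have h13 := h (Sum.inl 1) (Sum.inl 3) (by simp [sk4Rel])
    have h23 := h (Sum.inl 2) (Sum.inl 3) (by simp [sk4Rel])
    refine ⟨?_, ⟨?_, ?_, ?_, ?_⟩, ⟨?_, ?_, ?_, ?_⟩, ⟨?_, ?_, ?_, ?_⟩⟩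
    · intro i j hij
      fin_cases i <;> fin_cases j
      exacts [rfl, absurd hij h12, absurd hij h13, absurd hij h12.symm, rfl, absurd hij h23,
        absurd hij h13.symm, absurd hij h23.symm, rfl]
    all_goals
      intros
      apply h
      simp [sk4Rel, *]
  · rintro ⟨hinj, ⟨a1, a2, a3, a4⟩, ⟨b1, b2, b3, b4⟩, ⟨c1, c2, c3, c4⟩⟩
    have h12 : f (Sum.inl 1) ≠ f (Sum.inl 2) := hinj.ne (show (0 : Fin 3) ≠ 1 by decide)
    have h13 : f (Sum.inl 1) ≠ f (Sum.inl 3) := hinj.ne (show (0 : Fin 3) ≠ 2 by decide)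
    have h23 : f (Sum.inl 2) ≠ f (Sum.inl 3) := hinj.ne (show (1 : Fin 3) ≠ 2 by decide)
    rintro (u | u | u | u) (v | v | v | v) h <;> simp only [sk4Rel] at h
    · rcases h with ⟨rfl, rfl⟩ | ⟨rfl, rfl⟩ | ⟨rfl, rfl⟩ | ⟨rfl, rfl, h⟩ | ⟨rfl, rfl, h⟩ |
        ⟨rfl, rfl, h⟩
      exacts [h12, h13, h23, a1 h, b1 h, c1 h]
    · rcases h with ⟨rfl, h⟩ | ⟨rfl, h⟩
      exacts [a2 v h, a3 v h]
    · rcases h with ⟨rfl, h⟩ | ⟨rfl, h⟩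
      exacts [b2 v h, b3 v h]
    · rcases h with ⟨rfl, h⟩ | ⟨rfl, h⟩
      exacts [c2 v h, c3 v h]
    · exact a4 u v h
    · exact b4 u v h
    · exact c4 u v h

/-- A proper coloring of `SK₄^{s₁,s₂,s₃}` consists of an injective coloring `t` of the triangle,
a color `c` of `w`, and colorings of the interiors of the three paths. -/
def coloringEquiv (α : Type) (s₁ s₂ s₃ : ℕ) :
    {f : Fin 4 ⊕ (Fin (s₁-1) ⊕ Fin (s₂-1) ⊕ Fin (s₃-1)) → α //
      ∀ ⦃u v⦄, (sk4Graph s₁ s₂ s₃).Adj u v → f u ≠ f v} ≃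
    Σ p : (Fin 3 ↪ α) × α,
      {g : Fin (s₁-1) → α // IsPathColoring s₁ p.2 (p.1 0) g} ×
      {g : Fin (s₂-1) → α // IsPathColoring s₂ p.2 (p.1 1) g} ×
      {g : Fin (s₃-1) → α // IsPathColoring s₃ p.2 (p.1 2) g} where
  toFun f :=
    have h := (proper_iff s₁ s₂ s₃ f.1).1 f.2
    ⟨(⟨fun i => f.1 (Sum.inl i.succ), h.1⟩, f.1 (Sum.inl 0)),
      ⟨_, h.2.1⟩, ⟨_, h.2.2.1⟩, ⟨_, h.2.2.2⟩⟩
  invFun q := ⟨Sum.elim (Fin.cons q.1.2 q.1.1) (Sum.elim q.2.1.1 (Sum.elim q.2.2.1.1 q.2.2.2.1)),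
    (proper_iff s₁ s₂ s₃ _).2 ⟨q.1.1.injective, q.2.1.2, q.2.2.1.2, q.2.2.2.2⟩⟩
  left_inv f := by
    apply Subtype.ext
    funext v
    rcases v with v | v | v | v
    · refine Fin.cases ?_ (fun i => ?_) v <;> rfl
    all_goals rfl
  right_inv _ := rfl

/-- The sum over the color `c` of `w` for a fixed triangle coloring: `cᵢ + [c = tᵢ] dᵢ` plays the
role of `x + 1` times the number of colorings of the interior of the `i`-th path, and the `tᵢ` are distinct. -/
lemma sum_color_w (x : ℕ) (t : Fin 3 ↪ Fin (x + 1)) (c₁ c₂ c₃ d₁ d₂ d₃ : ℤ) :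
    ∑ c, (c₁ + if c = t 0 then d₁ else 0) * ((c₂ + if c = t 1 then d₂ else 0) *
      (c₃ + if c = t 2 then d₃ else 0)) =
      (x + 1) * (c₁ * c₂ * c₃) + d₁ * c₂ * c₃ + d₂ * c₁ * c₃ + d₃ * c₁ * c₂ := by
  have h01 : t 0 ≠ t 1 := t.injective.ne (by decide)
  have h02 : t 0 ≠ t 2 := t.injective.ne (by decide)
  have h12 : t 1 ≠ t 2 := t.injective.ne (by decide)
  have key : ∀ c, (c₁ + if c = t 0 then d₁ else 0) * ((c₂ + if c = t 1 then d₂ else 0) *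
      (c₃ + if c = t 2 then d₃ else 0)) = c₁ * c₂ * c₃ + (if c = t 0 then d₁ * c₂ * c₃ else 0)
        + (if c = t 1 then d₂ * c₁ * c₃ else 0) + (if c = t 2 then d₃ * c₁ * c₂ else 0) := by
    intro c
    split_ifs <;> first | (exfalso; simp_all; done) | ring
  simp only [key, Finset.sum_add_distrib, Finset.sum_const, Finset.card_univ, Fintype.card_fin,
    Finset.sum_ite_eq', Finset.mem_univ, if_true, nsmul_eq_mul]
  push_cast
  ring

lemma card_triangle (x : ℕ) :
    (Fintype.card (Fin 3 ↪ Fin (x + 1)) : ℤ) = (x + 1) * (x * (x - 1)) := by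
  rw [Fintype.card_embedding_eq, Fintype.card_fin, Fintype.card_fin]
  rcases x with _ | x
  · simp
  · simp [Nat.descFactorial]
    ring

/-- For positive integers `s₁, s₂, s₃` with `s = s₁+s₂+s₃` and every natural number `x`,
`(x+1) · π(SK₄^{s₁,s₂,s₃}, x+1) = x·(x-1)·(x^s + (-1)^(s₁+s₂+1)·x^(s₃)
  + (-1)^(s₁+s₃+1)·x^(s₂) + (-1)^(s₂+s₃+1)·x^(s₁) + 2·(-1)^s)`
as an identity in the integers. -/
theorem statement_8 (s₁ s₂ s₃ : ℕ) (h₁ : 1 ≤ s₁) (h₂ : 1 ≤ s₂) (h₃ : 1 ≤ s₃)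
    (s : ℕ) (hs : s = s₁ + s₂ + s₃) (x : ℕ) :
    ((x : ℤ) + 1) * (chromPoly (sk4Graph s₁ s₂ s₃) (x + 1) : ℤ) =
      (x : ℤ) * ((x : ℤ) - 1) * ((x : ℤ) ^ s + (-1) ^ (s₁ + s₂ + 1) * (x : ℤ) ^ s₃
        + (-1) ^ (s₁ + s₃ + 1) * (x : ℤ) ^ s₂ + (-1) ^ (s₂ + s₃ + 1) * (x : ℤ) ^ s₁
        + 2 * (-1) ^ s) := by
  obtain ⟨m₁, rfl⟩ := Nat.exists_eq_add_of_le' h₁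
  obtain ⟨m₂, rfl⟩ := Nat.exists_eq_add_of_le' h₂
  obtain ⟨m₃, rfl⟩ := Nat.exists_eq_add_of_le' h₃
  subst hs
  have hk : ((x : ℤ) + 1) ^ 2 ≠ 0 := by positivity
  apply mul_left_cancel₀ hk
  -- one factor `x + 1` for each of the three paths
  have h : ((x : ℤ) + 1) ^ 3 * (chromPoly (sk4Graph (m₁ + 1) (m₂ + 1) (m₃ + 1)) (x + 1) : ℤ) =
      ∑ t : Fin 3 ↪ Fin (x + 1), ∑ c : Fin (x + 1),
        (((x : ℤ) ^ (m₁ + 1) - (-1) ^ (m₁ + 1) +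
            if c = t 0 then ((x : ℤ) + 1) * (-1) ^ (m₁ + 1) else 0) *
        (((x : ℤ) ^ (m₂ + 1) - (-1) ^ (m₂ + 1) +
            if c = t 1 then ((x : ℤ) + 1) * (-1) ^ (m₂ + 1) else 0) *
        ((x : ℤ) ^ (m₃ + 1) - (-1) ^ (m₃ + 1) +
            if c = t 2 then ((x : ℤ) + 1) * (-1) ^ (m₃ + 1) else 0))) := by
    rw [chromPoly, Nat.card_congr (coloringEquiv _ _ _ _), Nat.card_sigma, Nat.cast_sum,
      Finset.mul_sum, Fintype.sum_prod_type]
    refine Finset.sum_congr rfl fun t _ => Finset.sum_congr rfl fun c _ => ?_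
    rw [← card_pathColoring, ← card_pathColoring, ← card_pathColoring, Nat.card_prod,
      Nat.card_prod]
    push_cast
    ring
  simp only [sum_color_w, Finset.sum_const, Finset.card_univ, nsmul_eq_mul, card_triangle] at h
  rw [← mul_assoc, ← pow_succ, h]
  ring
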